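/- If k_0 + k_1 < 0 and a(k_0 − k_1) < 0, then, with d* = √(2a(k_0 − k_1)/(k_0 + k_1)) (which is a positive real number under these hypotheses), f is strictly decreasing on (0, d*) and strictly increasing on (d*, ∞); in particular, d* is the unique global minimizer of f on (0,∞). -/

import Mathlib

/-- The standard Gaussian tail function `Q(x) = ∫_x^∞ (1/√(2π)) e^{-t²/2} dt`. -/
noncomputable def Q (x : ℝ) : ℝ :=
  ∫ t in Set.Ioi x, (1 / Real.sqrt (2 * Real.pi)) * Real.exp (-t ^ 2 / 2)

/-- The transmitter's (normalized) Bayes risk as a function of the normalized signal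
separation `d`, when the receiver applies the likelihood-ratio test with threshold
`τ = eᵃ`: `f(d) = k₀ e^{a/2} Q(a/d + d/2) + k₁ e^{-a/2} Q(d/2 - a/d)`. -/
noncomputable def f (a k0 k1 d : ℝ) : ℝ :=
  k0 * Real.exp (a / 2) * Q (a / d + d / 2) + k1 * Real.exp (-(a / 2)) * Q (d / 2 - a / d)

/-!
Since `(d/2)(a/d) = a/2` does not depend on `d`, completing the square shows that both weighted
densities `e^{a/2} φ(a/d + d/2)` and `e^{-a/2} φ(d/2 - a/d)` equal `e^{-(a/d)²/2} φ(d/2)`. This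
common positive factor comes out of `f'(d)`, leaving `2a(k₀ - k₁) - (k₀ + k₁)d²` up to a positive
multiple, and for `k₀ + k₁ < 0` that quadratic changes sign from negative to positive at `d*`.
-/

open MeasureTheory ProbabilityTheory Set
open scoped Topology

theorem hasDerivAt_setIntegral_Ioi {E : Type*} [NormedAddCommGroup E] [NormedSpace ℝ E]
    [CompleteSpace E] {g : ℝ → E} {a x : ℝ} (hg : IntegrableOn g (Ioi a)) (hax : a < x)
    (hmeas : StronglyMeasurableAtFilter g (𝓝 x)) (hcont : ContinuousAt g x) :
    HasDerivAt (fun y ↦ ∫ t in Ioi y, g t) (-g x) x := by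
  have hInt {y : ℝ} (hy : a < y) : IntegrableOn g (Ioi y) := hg.mono_set (Ioi_subset_Ioi hy.le)
  have hsplit : (fun y ↦ ∫ t in Ioi y, g t) =ᶠ[𝓝 x]
      fun y ↦ (∫ t in y..x, g t) + ∫ t in Ioi x, g t := by
    filter_upwards [lt_mem_nhds hax] with y hy
    exact (intervalIntegral.integral_interval_add_Ioi (hInt hy) (hInt hax)).symm
  have hleft : HasDerivAt (fun y ↦ ∫ t in y..x, g t) (-g x) x :=
    intervalIntegral.integral_hasDerivAt_left .refl hmeas hcont
  exact (hleft.add_const _).congr_of_eventuallyEq hsplit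

theorem apply_lt_of_strictAntiOn_Ioc_of_strictMonoOn_Ici {α β : Type*} [LinearOrder α]
    [Preorder β] {g : α → β} {a b x : α} (hanti : StrictAntiOn g (Ioc a b))
    (hmono : StrictMonoOn g (Ici b)) (hax : a < x) (hxb : x ≠ b) : g b < g x := by
  rcases hxb.lt_or_gt with hlt | hgt
  · exact hanti ⟨hax, hlt.le⟩ ⟨hax.trans hlt, le_rfl⟩ hlt
  · exact hmono self_mem_Ici hgt.le hgt

theorem continuous_gaussianPDFReal (m : ℝ) (v : NNReal) : Continuous (gaussianPDFReal m v) := by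
  rw [gaussianPDFReal_def]
  fun_prop

theorem exp_mul_gaussianPDFReal_add (m : ℝ) (v : NNReal) (x y : ℝ) :
    Real.exp ((x - m) * y / v) * gaussianPDFReal m v (x + y) =
      Real.exp (-y ^ 2 / (2 * v)) * gaussianPDFReal m v x := by
  simp only [gaussianPDFReal]
  rw [mul_left_comm, mul_left_comm (Real.exp (-y ^ 2 / _)), ← Real.exp_add, ← Real.exp_add]
  ring_nf

theorem Q_eq_setIntegral_gaussianPDFReal (x : ℝ) : Q x = ∫ t in Ioi x, gaussianPDFReal 0 1 t := by
  simp [Q, gaussianPDFReal]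

theorem hasDerivAt_Q (x : ℝ) : HasDerivAt Q (-gaussianPDFReal 0 1 x) x := by
  rw [funext Q_eq_setIntegral_gaussianPDFReal]
  exact hasDerivAt_setIntegral_Ioi (integrable_gaussianPDFReal 0 1).integrableOn (sub_one_lt x)
    (stronglyMeasurable_gaussianPDFReal 0 1).stronglyMeasurableAtFilter
    (continuous_gaussianPDFReal 0 1).continuousAt

theorem exp_half_mul_gaussianPDFReal_half_add_div (a : ℝ) {d : ℝ} (hd : d ≠ 0) :
    Real.exp (a / 2) * gaussianPDFReal 0 1 (d / 2 + a / d) =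
      Real.exp (-(a / d) ^ 2 / 2) * gaussianPDFReal 0 1 (d / 2) := by
  have hprod : d / 2 * (a / d) = a / 2 := by field_simp
  simpa [hprod] using exp_mul_gaussianPDFReal_add 0 1 (d / 2) (a / d)

/-- The separation `d* = √(2a(k₀ - k₁)/(k₀ + k₁))`, where the risk `f a k₀ k₁` is minimal if
`k₀ + k₁ < 0` and the radicand is positive. A negative radicand, for which the risk has no critical
point in `(0, ∞)`, gives the value `0`. -/
noncomputable def optimalSeparation (a k0 k1 : ℝ) : ℝ :=
  Real.sqrt (2 * a * (k0 - k1) / (k0 + k1))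

section Risk

variable (a k0 k1 : ℝ) {d : ℝ}

theorem hasDerivAt_f (hd : d ≠ 0) :
    HasDerivAt (f a k0 k1)
      (Real.exp (-(a / d) ^ 2 / 2) * gaussianPDFReal 0 1 (d / 2) / (2 * d ^ 2) *
        (2 * a * (k0 - k1) - (k0 + k1) * d ^ 2)) d := by
  have hdiv : HasDerivAt (fun x ↦ a / x) (-a / d ^ 2) d := by
    simpa using (hasDerivAt_const d a).fun_div (hasDerivAt_id d) hd
  have hhalf : HasDerivAt (fun x : ℝ ↦ x / 2) (1 / 2) d := (hasDerivAt_id d).div_const 2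
  have hzero := ((hasDerivAt_Q (a / d + d / 2)).comp d (hdiv.add hhalf)).const_mul
    (k0 * Real.exp (a / 2))
  have hone := ((hasDerivAt_Q (d / 2 - a / d)).comp d (hhalf.sub hdiv)).const_mul
    (k1 * Real.exp (-(a / 2)))
  have hweight_zero : Real.exp (a / 2) * gaussianPDFReal 0 1 (a / d + d / 2) =
      Real.exp (-(a / d) ^ 2 / 2) * gaussianPDFReal 0 1 (d / 2) := by
    rw [add_comm, exp_half_mul_gaussianPDFReal_half_add_div a hd]
  have hweight_one : Real.exp (-(a / 2)) * gaussianPDFReal 0 1 (d / 2 - a / d) =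
      Real.exp (-(a / d) ^ 2 / 2) * gaussianPDFReal 0 1 (d / 2) := by
    simpa [neg_div, sub_eq_add_neg] using exp_half_mul_gaussianPDFReal_half_add_div (-a) hd
  refine (hzero.add hone).congr_deriv ?_
  calc
    _ = -(k0 * (1 / 2 - a / d ^ 2) *
            (Real.exp (a / 2) * gaussianPDFReal 0 1 (a / d + d / 2))) -
          k1 * (1 / 2 + a / d ^ 2) *
            (Real.exp (-(a / 2)) * gaussianPDFReal 0 1 (d / 2 - a / d)) := by ring
    _ = _ := by
      rw [hweight_zero, hweight_one]
      field

theorem continuousOn_f : ContinuousOn (f a k0 k1) {0}ᶜ :=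
  fun _ hx ↦ (hasDerivAt_f a k0 k1 hx).continuousAt.continuousWithinAt

variable {a k0 k1}

theorem deriv_f_neg_iff (hsum : k0 + k1 < 0) (hd : 0 < d) :
    deriv (f a k0 k1) d < 0 ↔ d < optimalSeparation a k0 k1 := by
  have hpdf := gaussianPDFReal_pos 0 1 (d / 2) one_ne_zero
  rw [(hasDerivAt_f a k0 k1 hd.ne').deriv, ← neg_pos, ← mul_neg,
    mul_pos_iff_of_pos_left (by positivity), neg_sub, sub_pos, optimalSeparation,
    Real.lt_sqrt hd.le, lt_div_iff_of_neg hsum, mul_comm (k0 + k1)]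

theorem deriv_f_pos_iff (hsum : k0 + k1 < 0) (hd : 0 < d) :
    0 < deriv (f a k0 k1) d ↔ optimalSeparation a k0 k1 < d := by
  have hpdf := gaussianPDFReal_pos 0 1 (d / 2) one_ne_zero
  rw [(hasDerivAt_f a k0 k1 hd.ne').deriv, mul_pos_iff_of_pos_left (by positivity), sub_pos,
    optimalSeparation, Real.sqrt_lt' hd, div_lt_iff_of_neg hsum, mul_comm (k0 + k1)]

theorem optimalSeparation_pos (hsum : k0 + k1 < 0) (hdiff : a * (k0 - k1) < 0) :
    0 < optimalSeparation a k0 k1 :=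
  Real.sqrt_pos.2 (div_pos_of_neg_of_neg (by linarith) hsum)

theorem strictAntiOn_f_Ioc (hsum : k0 + k1 < 0) :
    StrictAntiOn (f a k0 k1) (Ioc 0 (optimalSeparation a k0 k1)) := by
  refine strictAntiOn_of_deriv_neg (convex_Ioc _ _)
    ((continuousOn_f a k0 k1).mono fun x hx ↦ hx.1.ne') fun x hx ↦ ?_
  rw [interior_Ioc] at hx
  exact (deriv_f_neg_iff hsum hx.1).2 hx.2

theorem strictMonoOn_f_Ici (hsum : k0 + k1 < 0) (hpos : 0 < optimalSeparation a k0 k1) :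
    StrictMonoOn (f a k0 k1) (Ici (optimalSeparation a k0 k1)) := by
  refine strictMonoOn_of_deriv_pos (convex_Ici _)
    ((continuousOn_f a k0 k1).mono fun x hx ↦ (hpos.trans_le hx).ne') fun x hx ↦ ?_
  rw [interior_Ici] at hx
  exact (deriv_f_pos_iff hsum (hpos.trans hx)).2 hx

end Risk

/-- If `k₀ + k₁ < 0` and `a(k₀ - k₁) < 0`, then with `d* = √(2a(k₀-k₁)/(k₀+k₁))`
(positive under these hypotheses), `f` is strictly decreasing on `(0, d*)` and strictly
increasing on `(d*, ∞)`; in particular `d*` is the unique global minimizer of `f` on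
`(0, ∞)`. -/
theorem stmt_10 (a k0 k1 : ℝ) (hsum : k0 + k1 < 0) (hdiff : a * (k0 - k1) < 0) :
    0 < Real.sqrt (2 * a * (k0 - k1) / (k0 + k1))
      ∧ StrictAntiOn (f a k0 k1) (Set.Ioo 0 (Real.sqrt (2 * a * (k0 - k1) / (k0 + k1))))
      ∧ StrictMonoOn (f a k0 k1) (Set.Ioi (Real.sqrt (2 * a * (k0 - k1) / (k0 + k1))))
      ∧ ∀ d : ℝ, 0 < d → d ≠ Real.sqrt (2 * a * (k0 - k1) / (k0 + k1)) →
          f a k0 k1 (Real.sqrt (2 * a * (k0 - k1) / (k0 + k1))) < f a k0 k1 d := by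
  have hpos := optimalSeparation_pos hsum hdiff
  have hanti : StrictAntiOn (f a k0 k1) (Ioc 0 (optimalSeparation a k0 k1)) :=
    strictAntiOn_f_Ioc hsum
  have hmono := strictMonoOn_f_Ici hsum hpos
  exact ⟨hpos, hanti.mono Ioo_subset_Ioc_self, hmono.mono Ioi_subset_Ici_self,
    fun d hd hne ↦ apply_lt_of_strictAntiOn_Ioc_of_strictMonoOn_Ici hanti hmono hd hne⟩
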